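/- Let R be a commutative ring and F a projective R-module, s ∈ F^∨. The shuffle product maps ⋆: F^{⊗p} ⊗ F^{⊗q} → F^{⊗(p+q)} (with Koszul signs for odd elements) form a chain map K^⊗ ⊗ K^⊗ → K^⊗, where K^⊗ is the complex with terms F^{⊗k} and differential f₁⊗⋯⊗f_k ↦ s(f₁)·f₂⊗⋯⊗f_k. Concretely, for the signed shuffle product one has d(x ⋆ y) = (dx) ⋆ y + (−1)^{|x|} x ⋆ (dy). -/

import Mathlib

noncomputable section

/-- The set of `(p,q)`-shuffles, as permutations of `Fin (p + q)` which are strictly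
increasing on the first `p` and on the last `q` indices. -/
def shuffleSet (p q : ℕ) : Finset (Equiv.Perm (Fin (p + q))) :=
  Finset.univ.filter (fun σ =>
    (∀ i j : Fin p, i < j → σ (Fin.castAdd q i) < σ (Fin.castAdd q j)) ∧
    (∀ i j : Fin q, i < j → σ (Fin.natAdd p i) < σ (Fin.natAdd p j)))

/-- The word `v₁ ⊗ v₂ ⊗ ⋯ ⊗ vₙ`, as an element of degree `n` of the tensor algebra
(whose underlying graded module is `T(V) = Tᶜ(V) = ⊕ₖ V^{⊗k}`). -/
def tensorWord {k V : Type*} [CommRing k] [AddCommGroup V] [Module k V]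
    {n : ℕ} (v : Fin n → V) : TensorAlgebra k V :=
  (List.ofFn fun i => TensorAlgebra.ι k (v i)).prod

/-!
A shuffle of two nonempty words starts with the first letter of one of them; removing that letter
leaves a shuffle of the remaining words. On permutations: a shuffle `σ` of a word cut at `k + 1`
sends to `0` either position `0` or position `k + 1`, and in the second case moving that letter to
the front contributes the sign `(-1) ^ (k + 1)`. The two cases of this recursion are the two terms
of the Leibniz rule.
-/

open Equiv.Perm (sign)

section MoveToFront

variable {n : ℕ}

/-- The permutation of `Fin (n + 1)` that moves position `a` to the front and permutes the other
positions, numbered in increasing order, by `e`. -/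
def moveToFront (a : Fin (n + 1)) (e : Equiv.Perm (Fin n)) : Equiv.Perm (Fin (n + 1)) :=
  Equiv.Perm.decomposeFin.symm (0, e) * Fin.cycleRange a

@[simp]
theorem moveToFront_self (a : Fin (n + 1)) (e : Equiv.Perm (Fin n)) : moveToFront a e a = 0 := by
  simp [moveToFront]

@[simp]
theorem moveToFront_succAbove (a : Fin (n + 1)) (e : Equiv.Perm (Fin n)) (j : Fin n) :
    moveToFront a e (a.succAbove j) = (e j).succ := by
  simp [moveToFront]

theorem sign_moveToFront (a : Fin (n + 1)) (e : Equiv.Perm (Fin n)) :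
    sign (moveToFront a e) = (-1) ^ (a : ℕ) * sign e := by
  simp [moveToFront, Fin.sign_cycleRange, mul_comm]

theorem moveToFront_injective (a : Fin (n + 1)) : Function.Injective (moveToFront a) := by
  intro e e' h
  ext1 j
  simpa using Equiv.congr_fun h (a.succAbove j)

theorem exists_moveToFront_eq_iff {a : Fin (n + 1)} {σ : Equiv.Perm (Fin (n + 1))} :
    (∃ e, moveToFront a e = σ) ↔ σ a = 0 := by
  refine ⟨by rintro ⟨e, rfl⟩; exact moveToFront_self a e, fun hσ => ?_⟩
  obtain ⟨⟨c, e⟩, he⟩ := Equiv.Perm.decomposeFin.symm.surjective (σ * (Fin.cycleRange a)⁻¹)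
  obtain rfl : c = 0 := by
    simpa [Equiv.Perm.inv_def, hσ] using Equiv.congr_fun he 0
  exact ⟨e, by rw [moveToFront, he, inv_mul_cancel_right]⟩

theorem comp_moveToFront_symm {α : Type*} (a : Fin (n + 1)) (e : Equiv.Perm (Fin n))
    (w : Fin (n + 1) → α) :
    w ∘ (moveToFront a e).symm = Fin.cons (w a) (a.removeNth w ∘ e.symm) := by
  rw [Equiv.comp_symm_eq]
  funext i
  cases i using Fin.succAboveCases a <;> simp [Fin.removeNth]

theorem strictMonoOn_moveToFront_iff {a : Fin (n + 1)} {S : Set (Fin (n + 1))}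
    (hS : a ∈ S → a ∈ lowerBounds S) (e : Equiv.Perm (Fin n)) :
    StrictMonoOn (moveToFront a e) S ↔ StrictMonoOn e (a.succAbove ⁻¹' S) := by
  constructor
  · intro h i hi j hj hij
    simpa using h hi hj (Fin.strictMono_succAbove a hij)
  · intro h i hi j hj hij
    cases j using Fin.succAboveCases a with
    | x => exact absurd (hS hj hi) hij.not_ge
    | p j =>
      cases i using Fin.succAboveCases a with
      | x => simp
      | p i => simpa using h hi hj ((Fin.strictMono_succAbove a).lt_iff_lt.mp hij)

theorem sum_filter_apply_eq_zero {M : Type*} [AddCommMonoid M]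
    (T : Finset (Equiv.Perm (Fin (n + 1)))) (a : Fin (n + 1))
    (f : Equiv.Perm (Fin (n + 1)) → M) :
    ∑ σ ∈ T with σ a = 0, f σ = ∑ e with moveToFront a e ∈ T, f (moveToFront a e) := by
  have image_eq : ({σ ∈ T | σ a = 0} : Finset _) =
      ({e | moveToFront a e ∈ T} : Finset _).image (moveToFront a) := by
    ext σ
    simp only [Finset.mem_filter, Finset.mem_image, ← exists_moveToFront_eq_iff]
    aesop
  rw [image_eq, Finset.sum_image (moveToFront_injective a).injOn]

end MoveToFront

section CutShuffles

variable {n : ℕ}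

open Classical in
/-- The shuffles of a word of length `n` cut after its first `c` letters. In contrast to
`shuffleSet`, the length is not of the form `p + q`, so that one can pass to shorter words without
casts. -/
def cutShuffles (n c : ℕ) : Finset (Equiv.Perm (Fin n)) :=
  {σ | StrictMonoOn σ {i | (i : ℕ) < c} ∧ StrictMonoOn σ {i | c ≤ (i : ℕ)}}

theorem mem_cutShuffles {c : ℕ} {σ : Equiv.Perm (Fin n)} :
    σ ∈ cutShuffles n c ↔
      StrictMonoOn σ {i | (i : ℕ) < c} ∧ StrictMonoOn σ {i | c ≤ (i : ℕ)} := by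
  simp [cutShuffles]

theorem shuffleSet_eq_cutShuffles (p q : ℕ) : shuffleSet p q = cutShuffles (p + q) p := by
  ext σ
  simp [shuffleSet, mem_cutShuffles, StrictMonoOn, Fin.forall_fin_add,
    (Fin.strictMono_castAdd q).lt_iff_lt]

theorem moveToFront_zero_mem_cutShuffles {c : ℕ} {e : Equiv.Perm (Fin n)} :
    moveToFront 0 e ∈ cutShuffles (n + 1) (c + 1) ↔ e ∈ cutShuffles n c := by
  rw [mem_cutShuffles, mem_cutShuffles, strictMonoOn_moveToFront_iff fun _ i _ => Fin.zero_le i,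
    strictMonoOn_moveToFront_iff fun _ i _ => Fin.zero_le i]
  simp

theorem moveToFront_cut_mem_cutShuffles {a : Fin (n + 1)} {e : Equiv.Perm (Fin n)} :
    moveToFront a e ∈ cutShuffles (n + 1) a ↔ e ∈ cutShuffles n a := by
  have left_block : a.succAbove ⁻¹' {i | (i : ℕ) < a} = {i : Fin n | (i : ℕ) < a} := by
    ext i
    exact Fin.succAbove_lt_iff_castSucc_lt a i
  have right_block : a.succAbove ⁻¹' {i | (a : ℕ) ≤ i} = {i : Fin n | (a : ℕ) ≤ i} := by
    ext i
    rw [Set.mem_preimage, Set.mem_ofPred_eq, ← Fin.le_def,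
      (Fin.ne_succAbove a i).le_iff_lt, Fin.lt_succAbove_iff_le_castSucc]
    rfl
  rw [mem_cutShuffles, mem_cutShuffles, strictMonoOn_moveToFront_iff (by simp),
    strictMonoOn_moveToFront_iff (by intro _ i hi; exact hi), left_block, right_block]

theorem apply_zero_eq_zero_or_apply_cut_eq_zero {k : Fin n} {σ : Equiv.Perm (Fin (n + 1))}
    (hσ : σ ∈ cutShuffles (n + 1) (k + 1)) : σ 0 = 0 ∨ σ k.succ = 0 := by
  obtain ⟨left_mono, right_mono⟩ := mem_cutShuffles.mp hσ
  obtain ⟨i, hi⟩ := σ.surjective 0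
  rcases lt_or_ge (i : ℕ) (k + 1) with hik | hki
  · have := left_mono.monotoneOn (Nat.succ_pos k) hik (Fin.zero_le i)
    exact .inl (Fin.le_zero_iff.mp (hi ▸ this))
  · have := right_mono.monotoneOn (Set.mem_ofPred.mpr k.val_succ.ge) hki hki
    exact .inr (Fin.le_zero_iff.mp (hi ▸ this))

theorem sum_cutShuffles_succ {M : Type*} [AddCommMonoid M] (k : Fin n)
    (f : Equiv.Perm (Fin (n + 1)) → M) :
    ∑ σ ∈ cutShuffles (n + 1) (k + 1), f σ =
      ∑ e ∈ cutShuffles n k, f (moveToFront 0 e) +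
        ∑ e ∈ cutShuffles n (k + 1), f (moveToFront k.succ e) := by
  have starts_with_cut_iff : ∀ σ ∈ cutShuffles (n + 1) (k + 1), ¬σ 0 = 0 ↔ σ k.succ = 0 :=
    fun σ hσ => ⟨(apply_zero_eq_zero_or_apply_cut_eq_zero hσ).resolve_left,
      fun hk h0 => Fin.succ_ne_zero k (σ.injective (hk.trans h0.symm))⟩
  rw [← Finset.sum_filter_add_sum_filter_not _ fun σ => σ 0 = 0,
    Finset.filter_congr starts_with_cut_iff, sum_filter_apply_eq_zero, sum_filter_apply_eq_zero]
  simp only [moveToFront_zero_mem_cutShuffles]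
  simp only [← Fin.val_succ, moveToFront_cut_mem_cutShuffles, Finset.filter_univ_mem]

end CutShuffles

section Append

variable {α : Type*} {p q : ℕ}

theorem tail_append (x : Fin (p + 1) → α) (y : Fin (q + 1) → α) :
    Fin.tail (n := p + 1 + q) (Fin.append (n := q + 1) x y) =
      Fin.append (Fin.tail x) y ∘ Fin.cast (by omega) := by
  rw [← Fin.cons_self_tail x, Fin.append_cons]
  rfl

theorem removeNth_natAdd_zero_append (x : Fin p → α) (y : Fin (q + 1) → α) :
    Fin.removeNth (n := p + q) (Fin.natAdd p (0 : Fin (q + 1))) (Fin.append (n := q + 1) x y) =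
      Fin.append x (Fin.tail y) := by
  funext i
  cases i using Fin.addCases with
  | left i =>
    have : (Fin.natAdd p (0 : Fin (q + 1))).succAbove (Fin.castAdd q i) = Fin.castAdd (q + 1) i :=
      Fin.succAbove_of_castSucc_lt _ _ (Nat.lt_add_right 0 i.isLt)
    rw [Fin.removeNth_apply, this, Fin.append_left, Fin.append_left]
  | right i =>
    have : (Fin.natAdd p (0 : Fin (q + 1))).succAbove (Fin.natAdd p i) = Fin.natAdd p i.succ :=
      Fin.succAbove_of_le_castSucc _ _ (Nat.le_add_right p i)
    rw [Fin.removeNth_apply, this, Fin.append_right, Fin.append_right, Fin.tail]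

end Append

section SignedShuffleSum

variable {n : ℕ} {α M : Type*} [AddCommGroup M]

/-- The value of `Φ`, extended additively, on the signed shuffle product of the first `c` letters
of `w` with the remaining ones. -/
def signedShuffleSum (c : ℕ) (Φ : (Fin n → α) → M) (w : Fin n → α) : M :=
  ∑ σ ∈ cutShuffles n c, (sign σ : ℤ) • Φ (w ∘ σ.symm)

theorem signedShuffleSum_succ (k : Fin n) (Φ : (Fin (n + 1) → α) → M) (w : Fin (n + 1) → α) :
    signedShuffleSum (k + 1) Φ w =
      signedShuffleSum k (fun v => Φ (Fin.cons (w 0) v)) (Fin.tail w) +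
        (-1 : ℤ) ^ ((k : ℕ) + 1) •
          signedShuffleSum (k + 1) (fun v => Φ (Fin.cons (w k.succ) v)) (k.succ.removeNth w) := by
  simp only [signedShuffleSum, sum_cutShuffles_succ, comp_moveToFront_symm, sign_moveToFront,
    Finset.smul_sum, smul_smul, Fin.removeNth_zero]
  simp

theorem signedShuffleSum_smul {S : Type*} [Monoid S] [DistribMulAction S M] (c : ℕ) (r : S)
    (Φ : (Fin n → α) → M) (w : Fin n → α) :
    signedShuffleSum c (fun v => r • Φ v) w = r • signedShuffleSum c Φ w := by
  simp only [signedShuffleSum, Finset.smul_sum, smul_comm r]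

theorem signedShuffleSum_comp_cast {m : ℕ} (h : m = n) (c : ℕ) (Φ : (Fin m → α) → M)
    (w : Fin n → α) :
    signedShuffleSum c Φ (w ∘ Fin.cast h) =
      signedShuffleSum c (fun v => Φ (v ∘ Fin.cast h)) w := by
  subst h
  rfl

theorem sum_shuffleSet_eq_signedShuffleSum {p q : ℕ} (Φ : (Fin (p + q) → α) → M)
    (w : Fin (p + q) → α) :
    ∑ σ ∈ shuffleSet p q, (sign σ : ℤ) • Φ (w ∘ σ.symm) = signedShuffleSum p Φ w := by
  rw [shuffleSet_eq_cutShuffles, signedShuffleSum]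

theorem signedShuffleSum_append_succ_succ {p q : ℕ} (Φ : (Fin (p + 1 + (q + 1)) → α) → M)
    (x : Fin (p + 1) → α) (y : Fin (q + 1) → α) :
    signedShuffleSum (p + 1) Φ (Fin.append x y) =
      signedShuffleSum p
          (fun v => Φ (Fin.cons (n := p + 1 + q) (x 0) (v ∘ Fin.cast (by omega))))
          (Fin.append (Fin.tail x) y) +
        (-1 : ℤ) ^ (p + 1) •
          signedShuffleSum (p + 1) (fun v => Φ (Fin.cons (n := p + 1 + q) (y 0) v))
            (Fin.append x (Fin.tail y)) := by
  have head_left : Fin.append (n := q + 1) x y (0 : Fin (p + 1 + q + 1)) = x 0 :=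
    Fin.append_left x y 0
  have head_right : Fin.append x y (Fin.natAdd (p + 1) 0) = y 0 := Fin.append_right x y 0
  have recursion :=
    signedShuffleSum_succ (Fin.castAdd q (Fin.last p)) Φ (Fin.append (n := q + 1) x y)
  have cut_eq : (Fin.castAdd q (Fin.last p)).succ = Fin.natAdd (p + 1) (0 : Fin (q + 1)) := rfl
  rw [cut_eq, head_left, head_right, tail_append, removeNth_natAdd_zero_append,
    signedShuffleSum_comp_cast] at recursion
  exact recursion

end SignedShuffleSum

theorem tensorWord_comp_cast {k V : Type*} [CommRing k] [AddCommGroup V] [Module k V]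
    {m n : ℕ} (h : m = n) (v : Fin n → V) :
    tensorWord (k := k) (v ∘ Fin.cast h) = tensorWord v := by
  subst h
  rfl

theorem shuffle_product_is_chain_map_general
    {R F : Type*} [CommRing R] [AddCommGroup F] [Module R F] (s : F → R)
    {p q : ℕ} (x : Fin (p + 1) → F) (y : Fin (q + 1) → F) :
    ∑ σ ∈ shuffleSet (p + 1) (q + 1), (sign σ : ℤ) •
        s (Fin.append x y (σ.symm 0)) •
          tensorWord (k := R) (fun i : Fin (p + 1 + q) => Fin.append x y (σ.symm i.succ)) =
      s (x 0) • ∑ σ ∈ shuffleSet p (q + 1), (sign σ : ℤ) •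
          tensorWord (k := R) (fun i => Fin.append (fun j => x j.succ) y (σ.symm i)) +
        (-1 : ℤ) ^ (p + 1) • s (y 0) • ∑ σ ∈ shuffleSet (p + 1) q, (sign σ : ℤ) •
          tensorWord (k := R) (fun i => Fin.append x (fun j => y j.succ) (σ.symm i)) := by
  let d (v : Fin (p + 1 + q + 1) → F) : TensorAlgebra R F := s (v 0) • tensorWord (Fin.tail v)
  have d_cons (a : F) (v : Fin (p + 1 + q) → F) : d (Fin.cons a v) = s a • tensorWord v := by
    simp only [d, Fin.cons_zero, Fin.tail_cons]
  have leibniz := signedShuffleSum_append_succ_succ d x y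
  simp only [d_cons, tensorWord_comp_cast, signedShuffleSum_smul] at leibniz
  rw [← sum_shuffleSet_eq_signedShuffleSum, ← sum_shuffleSet_eq_signedShuffleSum] at leibniz
  exact (sum_shuffleSet_eq_signedShuffleSum (q := q + 1) d (Fin.append x y)).trans leibniz

/-- Let `R` be a commutative ring, `F` a projective `R`-module and
`s ∈ F^∨`.  The signed (Koszul-sign) shuffle product maps
`⋆ : F^{⊗p} ⊗ F^{⊗q} → F^{⊗(p+q)}` form a chain map `K^⊗ ⊗ K^⊗ → K^⊗`, where `K^⊗` is
the complex with terms `F^{⊗k}` and differential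
`d(x₁|⋯|x_k) = s(x₁) • (x₂|⋯|x_k)`.  Concretely, for words `x` of length `p + 1` and
`y` of length `q + 1` (treated as words of odd elements, so that the Koszul sign of a
shuffle `σ` is `sign σ` and `|x| = p + 1`):
`d(x ⋆ y) = (dx) ⋆ y + (-1)^{|x|} x ⋆ (dy)`. -/
theorem shuffle_product_is_chain_map
    (R F : Type*) [CommRing R] [AddCommGroup F] [Module R F]
    [Module.Projective R F] (s : F →ₗ[R] R) :
    ∀ (p q : ℕ) (x : Fin (p + 1) → F) (y : Fin (q + 1) → F),
      -- `d (x ⋆ y)`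
      ∑ σ ∈ shuffleSet (p + 1) (q + 1),
        ((Equiv.Perm.sign σ : ℤ) •
          (s (Fin.append x y (σ.symm ⟨0, by omega⟩)) •
            tensorWord (k := R) (fun i : Fin (p + q + 1) =>
              Fin.append x y (σ.symm (Fin.cast (by omega) i.succ))))) =
      -- `(d x) ⋆ y`
      s (x 0) • (∑ σ ∈ shuffleSet p (q + 1),
          ((Equiv.Perm.sign σ : ℤ) •
            tensorWord (k := R) (fun i => Fin.append (fun j => x j.succ) y (σ.symm i)))) +
      -- `+ (-1)^{|x|} x ⋆ (d y)`
      ((-1 : ℤ) ^ (p + 1)) •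
        (s (y 0) • (∑ σ ∈ shuffleSet (p + 1) q,
          ((Equiv.Perm.sign σ : ℤ) •
            tensorWord (k := R) (fun i => Fin.append x (fun j => y j.succ) (σ.symm i))))) := by
  intro p q x y
  rw [← shuffle_product_is_chain_map_general s x y]
  exact Finset.sum_congr rfl fun σ _ => congrArg _ (congrArg _
    (tensorWord_comp_cast (Nat.add_right_comm p q 1) fun i => Fin.append x y (σ.symm i.succ)))

end
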